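/- arXiv:2005.10242 — 2 statements merged into one kernel-verified Lean document; each statement's English description precedes it below -/
import Mathlib

section
/- Let d ≥ 1 and t > 0. The Gaussian energy of the uniform measure on S^d has the closed form I_{G_t}[σ_d] = e^{−2t} · Σ_{n=0}^∞ t^{2n} / ( ((d+1)/2)_n · n! ), i.e., I_{G_t}[σ_d] = e^{−2t} · ₀F₁(;(d+1)/2; t²). -/
open MeasureTheory Real Filter Metric
open scoped RealInnerProductSpace ENNReal Topology BigOperators

noncomputable section

/-- `ℝ^n` as a Euclidean space. -/
abbrev Euc (n : ℕ) : Type := EuclideanSpace ℝ (Fin n)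

/-- The unit sphere in `ℝ^m`; the sphere `S^d` of the informal statement is `Sph (d+1)`. -/
abbrev Sph (m : ℕ) := Metric.sphere (0 : Euc m) 1

/-- The uniform (normalized surface-area) probability measure on the unit sphere of `ℝ^m`. -/
noncomputable def unifSphere (m : ℕ) : Measure (Sph m) :=
  ((volume : Measure (Euc m)).toSphere Set.univ)⁻¹ • (volume : Measure (Euc m)).toSphere

/-- Gaussian energy `I_{G_t}[μ] = ∫∫ exp(−t‖u−v‖²) dμ dμ` of a measure on the sphere. -/
noncomputable def gaussEnergy (t : ℝ) {m : ℕ} (μ : Measure (Sph m)) : ℝ :=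
  ∫ u, ∫ v, Real.exp (-t * ‖(u : Euc m) - (v : Euc m)‖ ^ 2) ∂μ ∂μ

/-- Confluent hypergeometric limit function `₀F₁(; α; z) = Σ_n zⁿ/((α)_n n!)`. -/
noncomputable def hyp0F1 (α z : ℝ) : ℝ :=
  ∑' k : ℕ, z ^ k / ((ascPochhammer ℝ k).eval α * (Nat.factorial k : ℝ))

lemma aux_polar (d : ℕ) (u : Euc (d+1)) (n : ℕ) :
    ∫ x : Euc (d+1), ⟪u, x⟫ ^ n * Real.exp (-‖x‖ ^ 2) =
      (∫ v : Sph (d+1), ⟪u, (v : Euc (d+1))⟫ ^ n ∂(volume : Measure (Euc (d+1))).toSphere) *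
        (1 / 2 * Real.Gamma (((n : ℝ) + d + 1) / 2)) := by
  have hdim : Module.finrank ℝ (Euc (d+1)) - 1 = d := by simp
  calc
    _ = ∫ x : ({(0)}ᶜ : Set (Euc (d+1))), ⟪u, x.1⟫ ^ n * Real.exp (-‖x.1‖ ^ 2)
          ∂((volume : Measure (Euc (d+1))).comap (↑)) := by
      rw [integral_subtype_comap (measurableSet_singleton _).compl
        fun x : Euc (d+1) ↦ ⟪u, x⟫ ^ n * Real.exp (-‖x‖ ^ 2), restrict_compl_singleton]
    _ = ∫ p : Sph (d+1) × Set.Ioi (0:ℝ), ⟪u, (p.1 : Euc (d+1))⟫ ^ n *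
          ((p.2 : ℝ) ^ n * Real.exp (-(p.2 : ℝ) ^ 2))
          ∂(volume : Measure (Euc (d+1))).toSphere.prod (.volumeIoiPow d) := by
      have := (volume : Measure (Euc (d+1))).measurePreserving_homeomorphUnitSphereProd
      rw [hdim] at this
      rw [← this.integral_comp (Homeomorph.measurableEmbedding _)]
      apply integral_congr_ae
      refine Filter.Eventually.of_forall ?_
      rintro ⟨x, hx⟩
      have hx' : ‖x‖ ≠ 0 := by simpa using hx
      simp only [homeomorphUnitSphereProd_apply_fst_coe, homeomorphUnitSphereProd_apply_snd_coe]
      rw [inner_smul_right, mul_pow, ← mul_assoc, mul_comm (_ * _) (‖x‖ ^ n), ← mul_assoc,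
        ← mul_pow, mul_inv_cancel₀ hx', one_pow, one_mul]
    _ = _ := by
      rw [integral_prod_mul (fun v : Sph (d+1) => ⟪u, (v : Euc (d+1))⟫ ^ n)
        (fun r : Set.Ioi (0:ℝ) => (r : ℝ) ^ n * Real.exp (-(r : ℝ) ^ 2))]
      congr 1
      simp only [Measure.volumeIoiPow, ENNReal.ofReal]
      rw [integral_withDensity_eq_integral_smul,
        integral_subtype_comap measurableSet_Ioi
          fun a : ℝ ↦ Real.toNNReal (a ^ d) • (a ^ n * Real.exp (-a ^ 2))]
      · have h := integral_rpow_mul_exp_neg_rpow (p := 2) (q := (n : ℝ) + d) (by norm_num)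
          (by have : (0:ℝ) ≤ (n : ℝ) + d := by positivity
              linarith)
        rw [← h]
        refine setIntegral_congr_fun measurableSet_Ioi fun x hx ↦ ?_
        have hx0 : (0:ℝ) < x := hx
        simp only [NNReal.smul_def, Real.coe_toNNReal _ (pow_nonneg hx0.le _), smul_eq_mul]
        rw [Real.rpow_add hx0, Real.rpow_natCast, Real.rpow_natCast, Real.rpow_two]
        ring
      · exact (measurable_subtype_coe.pow_const _).real_toNNReal

lemma aux_one (k : ℕ) : ∫ y : ℝ, y ^ (2 * k) * Real.exp (-y ^ 2) = Real.Gamma (1 / 2 + k) := by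
  have h := integral_comp_abs (f := fun y : ℝ => y ^ (2 * k) * Real.exp (-y ^ 2))
  simp only [sq_abs, pow_mul] at h
  simp only [pow_mul]
  rw [h]
  have h := integral_rpow_mul_exp_neg_rpow (p := 2) (q := ((2 * k : ℕ) : ℝ)) (by norm_num)
          (by have : (0:ℝ) ≤ ((2 * k : ℕ) : ℝ) := by positivity
              linarith)
  simp only [Real.rpow_natCast, Real.rpow_two, pow_mul] at h
  rw [h]
  push_cast
  rw [← mul_assoc, show (2:ℝ) * (1/2) = 1 by norm_num, one_mul]
  congr 1
  ring

lemma aux_cart (d : ℕ) (u : Euc (d+1)) (hu : ‖u‖ = 1) (k : ℕ) :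
    ∫ x : Euc (d+1), ⟪u, x⟫ ^ (2 * k) * Real.exp (-‖x‖ ^ 2) =
      Real.Gamma (1 / 2 + k) * (√π) ^ d := by
  obtain ⟨b, hb⟩ := Orthonormal.exists_orthonormalBasis_extension_of_card_eq (𝕜 := ℝ)
    (E := Euc (d+1)) (ι := Fin (d+1)) (by simp) (v := fun _ => u) (s := {0}) (by
      rw [orthonormal_iff_ite]
      rintro ⟨i, hi⟩ ⟨j, hj⟩
      simp only [Set.mem_singleton_iff] at hi hj
      subst hi; subst hj
      simp [hu])
  have hb0 : b 0 = u := hb 0 rfl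
  have h1 : ∀ x : Euc (d+1), ⟪u, x⟫ ^ (2 * k) * Real.exp (-‖x‖ ^ 2) =
      (fun y : Euc (d+1) => (y 0) ^ (2 * k) * Real.exp (-‖y‖ ^ 2)) (b.repr x) := by
    intro x
    simp only [b.repr_apply_apply, hb0, LinearIsometryEquiv.norm_map]
  simp_rw [h1]
  rw [b.measurePreserving_repr.integral_comp b.repr.toHomeomorph.measurableEmbedding
      (fun y : Euc (d+1) => (y 0) ^ (2 * k) * Real.exp (-‖y‖ ^ 2)),
    ← (PiLp.volume_preserving_toLp (Fin (d+1))).integral_comp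
      (MeasurableEquiv.toLp 2 (Fin (d+1) → ℝ)).measurableEmbedding]
  have h2 : ∀ x : Fin (d+1) → ℝ,
      ((WithLp.toLp 2 x : Euc (d+1)) 0) ^ (2 * k) * Real.exp (-‖(WithLp.toLp 2 x : Euc (d+1))‖ ^ 2)
      = ∏ i, (fun (i : Fin (d+1)) (y : ℝ) =>
          (if i = 0 then y ^ (2 * k) else 1) * Real.exp (-y ^ 2)) i (x i) := by
    intro x
    rw [Finset.prod_mul_distrib, ← Real.exp_sum, EuclideanSpace.norm_sq_eq]
    simp
  simp_rw [h2]
  have h4 := integral_fintype_prod_volume_eq_prod (fun (i : Fin (d+1)) (y : ℝ) =>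
          (if i = 0 then y ^ (2 * k) else 1) * Real.exp (-y ^ 2))
  refine h4.trans ?_
  rw [Fin.prod_univ_succ]
  have h3 : ∫ y : ℝ, Real.exp (-y ^ 2) = √π := by
    simpa using integral_gaussian 1
  simp [aux_one, Fin.succ_ne_zero, h3]

lemma aux_gamma (a : ℝ) (ha : 0 < a) (k : ℕ) :
    Real.Gamma (a + k) = (ascPochhammer ℝ k).eval a * Real.Gamma a := by
  induction k with
  | zero => simp
  | succ k ih =>
    rw [ascPochhammer_succ_eval, Nat.cast_succ, ← add_assoc, Real.Gamma_add_one (by positivity), ih]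
    ring

lemma aux_fact (k : ℕ) :
    ((2 * k).factorial : ℝ) = 4 ^ k * k.factorial * (ascPochhammer ℝ k).eval (1 / 2) := by
  induction k with
  | zero => simp
  | succ k ih =>
    rw [ascPochhammer_succ_eval, show 2 * (k + 1) = 2 * k + 1 + 1 by ring, Nat.factorial_succ,
      Nat.factorial_succ, Nat.factorial_succ]
    push_cast
    rw [ih]
    ring

lemma aux_pos (a : ℝ) (ha : 0 < a) (k : ℕ) : 0 < (ascPochhammer ℝ k).eval a :=
  ascPochhammer_pos k a ha

lemma aux_even (d : ℕ) (u : Euc (d+1)) (hu : ‖u‖ = 1) (k : ℕ) :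
    (∫ v : Sph (d+1), ⟪u, (v : Euc (d+1))⟫ ^ (2 * k) ∂(volume : Measure (Euc (d+1))).toSphere) =
      (volume : Measure (Euc (d+1))).toSphere.real Set.univ *
        ((ascPochhammer ℝ k).eval (1 / 2) / (ascPochhammer ℝ k).eval (((d : ℝ) + 1) / 2)) := by
  have ha : (0:ℝ) < ((d : ℝ) + 1) / 2 := by positivity
  have h0 := (aux_polar d u (2 * 0)).symm.trans (aux_cart d u hu 0)
  have hk := (aux_polar d u (2 * k)).symm.trans (aux_cart d u hu k)
  rw [show (((2 * k : ℕ) : ℝ) + d + 1) / 2 = ((d : ℝ) + 1) / 2 + k by push_cast; ring,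
    aux_gamma _ ha, aux_gamma _ (by norm_num)] at hk
  simp only [mul_zero, pow_zero, integral_const, smul_eq_mul, mul_one, Nat.cast_zero, zero_add,
    add_zero] at h0
  have hG := Real.Gamma_pos_of_pos ha
  have hP := aux_pos _ ha k
  rw [mul_div_assoc', eq_div_iff hP.ne']
  apply mul_right_cancel₀ hG.ne'
  linear_combination 2 * hk - 2 * (ascPochhammer ℝ k).eval (1/2) * h0

lemma aux_odd (d : ℕ) (u : Euc (d+1)) (n : ℕ) (hn : Odd n) :
    (∫ v : Sph (d+1), ⟪u, (v : Euc (d+1))⟫ ^ n ∂(volume : Measure (Euc (d+1))).toSphere) = 0 := by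
  have h := aux_polar d u n
  have h2 := integral_neg_eq_self (fun x : Euc (d+1) => ⟪u, x⟫ ^ n * Real.exp (-‖x‖ ^ 2)) volume
  simp only [inner_neg_right, norm_neg, hn.neg_pow, neg_mul, integral_neg] at h2
  have h3 : ∫ x : Euc (d+1), ⟪u, x⟫ ^ n * Real.exp (-‖x‖ ^ 2) = 0 := by
    linarith
  rw [h3] at h
  have hG : 0 < Real.Gamma (((n : ℝ) + d + 1) / 2) := Real.Gamma_pos_of_pos (by positivity)
  rcases mul_eq_zero.1 h.symm with h | h
  · exact h
  · linarith

lemma aux_univ (d : ℕ) : 0 < (volume : Measure (Euc (d+1))).toSphere.real Set.univ := by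
  rw [measureReal_def]
  refine ENNReal.toReal_pos ?_ (measure_ne_top _ _)
  rw [Ne, Measure.measure_univ_eq_zero]
  exact Measure.toSphere_ne_zero _

instance aux_prob (d : ℕ) : IsProbabilityMeasure (unifSphere (d+1)) := by
  constructor
  rw [unifSphere, Measure.smul_apply, smul_eq_mul]
  refine ENNReal.inv_mul_cancel ?_ (measure_ne_top _ _)
  rw [Ne, Measure.measure_univ_eq_zero]
  exact Measure.toSphere_ne_zero _

lemma aux_hasSum (d : ℕ) (u : Sph (d+1)) (t : ℝ) :
    HasSum (fun k : ℕ => t ^ (2 * k) /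
            ((ascPochhammer ℝ k).eval (((d : ℝ) + 1) / 2) * (Nat.factorial k : ℝ)))
      (∫ v, Real.exp (2 * t * ⟪(u : Euc (d+1)), (v : Euc (d+1))⟫) ∂unifSphere (d+1)) := by
  have hexp : ∀ x : ℝ, HasSum (fun n : ℕ => x ^ n / (n.factorial : ℝ)) (Real.exp x) := by
    intro x
    rw [Real.exp_eq_exp_ℝ]
    exact NormedSpace.expSeries_div_hasSum_exp x
  have hu : ‖(u : Euc (d+1))‖ = 1 := by simp
  have hs := hasSum_integral_of_dominated_convergence (μ := unifSphere (d+1))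
    (F := fun (n : ℕ) (v : Sph (d+1)) =>
      (2 * t * ⟪(u : Euc (d+1)), (v : Euc (d+1))⟫) ^ n / (n.factorial : ℝ))
    (f := fun v => Real.exp (2 * t * ⟪(u : Euc (d+1)), (v : Euc (d+1))⟫))
    (fun n _ => |2 * t| ^ n / (n.factorial : ℝ))
    (fun n => by
      refine Continuous.aestronglyMeasurable ?_
      fun_prop)
    (fun n => Filter.Eventually.of_forall fun v => by
      have hv : ‖(v : Euc (d+1))‖ = 1 := by simp
      have hi : |⟪(u : Euc (d+1)), (v : Euc (d+1))⟫| ≤ 1 := by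
        have := abs_real_inner_le_norm (u : Euc (d+1)) (v : Euc (d+1))
        rwa [hu, hv, one_mul] at this
      rw [norm_div, norm_pow, Real.norm_eq_abs, abs_mul, RCLike.norm_natCast]
      gcongr
      exact mul_le_of_le_one_right (abs_nonneg _) hi)
    (Filter.Eventually.of_forall fun v => (hexp _).summable)
    (integrable_const _)
    (Filter.Eventually.of_forall fun v => hexp _)
  have hodd : ∀ n ∉ Set.range (fun k : ℕ => 2 * k),
      ∫ v : Sph (d+1), (2 * t * ⟪(u : Euc (d+1)), (v : Euc (d+1))⟫) ^ n / (n.factorial : ℝ)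
        ∂unifSphere (d+1) = 0 := by
    intro n hn
    have hn : Odd n := by
      rw [← Nat.not_even_iff_odd]
      rintro ⟨k, hk⟩
      exact hn ⟨k, by simp only; omega⟩
    rw [integral_div]
    simp_rw [mul_pow (2 * t)]
    rw [integral_const_mul, unifSphere, integral_smul_measure, aux_odd d u n hn]
    simp
  have hinj : Function.Injective (fun k : ℕ => 2 * k) := fun a b h => by
    simpa using h
  refine ((hinj.hasSum_iff hodd).2 hs).congr_fun ?_
  intro k
  simp only [Function.comp]
  rw [integral_div]
  simp_rw [mul_pow (2 * t)]
  rw [integral_const_mul, unifSphere, integral_smul_measure, aux_even d u hu k, ENNReal.toReal_inv,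
    ← measureReal_def, aux_fact, smul_eq_mul]
  have := aux_univ d
  have h1 := aux_pos (1/2) (by norm_num) k
  have h2 := aux_pos (((d : ℝ) + 1) / 2) (by positivity) k
  have h3 : (0:ℝ) < k.factorial := by positivity
  rw [inv_mul_cancel_left₀ this.ne']
  have h4 : (2 * t) ^ (2 * k) = 4 ^ k * t ^ (2 * k) := by
    rw [mul_pow, pow_mul 2]; norm_num
  rw [h4]
  generalize (ascPochhammer ℝ k).eval (1 / 2 : ℝ) = p at *
  generalize (ascPochhammer ℝ k).eval (((d : ℝ) + 1) / 2) = q at *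
  field_simp

/-- Closed form for the Gaussian energy of the uniform measure on `S^d`:
`I_{G_t}[σ_d] = e^{−2t} Σ_n t^{2n}/(((d+1)/2)_n n!) = e^{−2t}·₀F₁(;(d+1)/2;t²)`. -/
theorem gaussEnergy_unifSphere_eq (d : ℕ) (hd : 1 ≤ d) (t : ℝ) (ht : 0 < t) :
    gaussEnergy t (unifSphere (d + 1)) =
        Real.exp (-2 * t) *
          ∑' k : ℕ, t ^ (2 * k) /
            ((ascPochhammer ℝ k).eval (((d : ℝ) + 1) / 2) * (Nat.factorial k : ℝ)) ∧
      gaussEnergy t (unifSphere (d + 1)) =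
        Real.exp (-2 * t) * hyp0F1 (((d : ℝ) + 1) / 2) (t ^ 2) := by
  have h : gaussEnergy t (unifSphere (d + 1)) =
        Real.exp (-2 * t) *
          ∑' k : ℕ, t ^ (2 * k) /
            ((ascPochhammer ℝ k).eval (((d : ℝ) + 1) / 2) * (Nat.factorial k : ℝ)) := by
    have hin : ∀ u : Sph (d + 1), ∫ v : Sph (d + 1),
        Real.exp (-t * ‖(u : Euc (d + 1)) - (v : Euc (d + 1))‖ ^ 2) ∂unifSphere (d + 1) =
        Real.exp (-2 * t) *
          ∑' k : ℕ, t ^ (2 * k) /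
            ((ascPochhammer ℝ k).eval (((d : ℝ) + 1) / 2) * (Nat.factorial k : ℝ)) := by
      intro u
      rw [(aux_hasSum d u t).tsum_eq, ← integral_const_mul]
      congr 1
      ext v
      have hu : ‖(u : Euc (d+1))‖ = 1 := by simp
      have hv : ‖(v : Euc (d+1))‖ = 1 := by simp
      rw [← Real.exp_add, norm_sub_sq_real, hu, hv]
      congr 1
      ring
    unfold gaussEnergy
    simp_rw [hin]
    simp
  refine ⟨h, ?_⟩
  rw [h, hyp0F1]
  simp_rw [pow_mul]
end
end

section
/- Let t > 0, m ≥ 2, and B > 1 an integer such that ₀F₁(;m/2; t²) > e^{2t}/B. Then for any points u₁, …, u_B ∈ S^{m−1}, the off-diagonal empirical uniformity quantity satisfies log( (1/(B(B−1))) Σ_{i≠j} e^{−t‖u_i − u_j‖₂²} ) > log( (B·e^{−2t}·₀F₁(;m/2; t²) − 1)/(B−1) ). -/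
open MeasureTheory Real Filter Metric
open scoped RealInnerProductSpace ENNReal Topology BigOperators

noncomputable section

/-- Gaussian moments. -/
def gw : ℕ → ℝ
  | 0 => 1
  | 1 => 0
  | (n + 2) => (n + 1) * gw n

/-- Formal Gaussian expectation on polynomials. -/
def gE (m : ℕ) : MvPolynomial (Fin m) ℝ →ₗ[ℝ] ℝ :=
  (MvPolynomial.basisMonomials (Fin m) ℝ).constr ℝ (fun s => ∏ i, gw (s i))

lemma gE_monomial (m : ℕ) (s : Fin m →₀ ℕ) (c : ℝ) :
    gE m (MvPolynomial.monomial s c) = c * ∏ i, gw (s i) := by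
  have h : MvPolynomial.monomial s c = c • (MvPolynomial.basisMonomials (Fin m) ℝ s) := by
    simp [MvPolynomial.smul_monomial]
  rw [h, map_smul, gE, Module.Basis.constr_basis, smul_eq_mul]

lemma gw_succ (n : ℕ) : gw (n + 1) = n * gw (n - 1) := by
  cases n with
  | zero => simp [gw]
  | succ n => simp [gw]

lemma gE_X_mul (m : ℕ) (a : Fin m) (p : MvPolynomial (Fin m) ℝ) :
    gE m (MvPolynomial.X a * p) = gE m (MvPolynomial.pderiv a p) := by
  induction p using MvPolynomial.induction_on' with
  | monomial s c =>
    rw [MvPolynomial.pderiv_monomial, gE_monomial, MvPolynomial.X, MvPolynomial.monomial_mul,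
      gE_monomial, ← Finset.mul_prod_erase _ _ (Finset.mem_univ a),
      ← Finset.mul_prod_erase _ (fun i => gw ((s - (Finsupp.single a 1 : Fin m →₀ ℕ)) i)) (Finset.mem_univ a)]
    have h1 : ∀ i ∈ Finset.univ.erase a, gw (((Finsupp.single a 1 : Fin m →₀ ℕ) + s) i) = gw (s i) := by
      intro i hi
      have : a ≠ i := (Finset.ne_of_mem_erase hi).symm
      simp [Finsupp.single_apply, this]
    have h2 : ∀ i ∈ Finset.univ.erase a, gw ((s - (Finsupp.single a 1 : Fin m →₀ ℕ)) i) = gw (s i) := by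
      intro i hi
      have : a ≠ i := (Finset.ne_of_mem_erase hi).symm
      simp [Finsupp.single_apply, this]
    rw [Finset.prod_congr rfl h1, Finset.prod_congr rfl h2]
    have h3 : gw (((Finsupp.single a 1 : Fin m →₀ ℕ) + s) a) = s a * gw ((s - (Finsupp.single a 1 : Fin m →₀ ℕ)) a) := by
      simp [add_comm 1, gw_succ]
    rw [h3]; ring
  | add p q hp hq => rw [mul_add, map_add, map_add, map_add, hp, hq]

/-- Linear form. -/
def gl {m : ℕ} (y : Fin m → ℝ) : MvPolynomial (Fin m) ℝ :=
  ∑ a, MvPolynomial.C (y a) * MvPolynomial.X a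

lemma gE_C_mul (m : ℕ) (c : ℝ) (p : MvPolynomial (Fin m) ℝ) :
    gE m (MvPolynomial.C c * p) = c * gE m p := by
  rw [← MvPolynomial.smul_eq_C_mul, map_smul, smul_eq_mul]

lemma pderiv_gl {m : ℕ} (y : Fin m → ℝ) (a : Fin m) :
    MvPolynomial.pderiv a (gl y) = MvPolynomial.C (y a) := by
  simp [gl, map_sum, MvPolynomial.pderiv_X, Pi.single_apply]

lemma gE_gl_pow {m : ℕ} (y : Fin m → ℝ) (n : ℕ) :
    gE m (gl y ^ (n + 2)) = (n + 1) * (∑ a, y a ^ 2) * gE m (gl y ^ n) := by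
  have h : gl y ^ (n + 2) = ∑ a, MvPolynomial.C (y a) * (MvPolynomial.X a * gl y ^ (n + 1)) := by
    rw [pow_succ' _ (n + 1)]
    conv_lhs => rw [gl]
    rw [Finset.sum_mul]
    simp only [mul_assoc]
    rfl
  rw [h, map_sum, Finset.mul_sum, Finset.sum_mul]
  refine Finset.sum_congr rfl fun a _ => ?_
  rw [gE_C_mul, gE_X_mul, MvPolynomial.pderiv_pow, pderiv_gl]
  have : ((n + 1 : ℕ) : MvPolynomial (Fin m) ℝ) * gl y ^ (n + 1 - 1) * MvPolynomial.C (y a)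
      = MvPolynomial.C ((n + 1 : ℝ) * y a) * gl y ^ n := by
    simp; ring
  rw [this, gE_C_mul]; ring

lemma gE_one (m : ℕ) : gE m 1 = 1 := by
  rw [show (1 : MvPolynomial (Fin m) ℝ) = MvPolynomial.monomial 0 1 from rfl, gE_monomial]
  simp [gw]

/-- odd double factorial -/
def gD (k : ℕ) : ℝ := ∏ j ∈ Finset.range k, (2 * (j : ℝ) + 1)

/-- `m (m+2) ... (m+2k-2)` -/
def gP (m k : ℕ) : ℝ := ∏ j ∈ Finset.range k, ((m : ℝ) + 2 * j)

lemma gE_gl_even {m : ℕ} (y : Fin m → ℝ) (k : ℕ) :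
    gE m (gl y ^ (2 * k)) = gD k * (∑ a, y a ^ 2) ^ k := by
  induction k with
  | zero => simp [gE_one, gD]
  | succ k ih =>
    rw [show 2 * (k + 1) = 2 * k + 2 by ring, gE_gl_pow, ih, gD, gD, Finset.prod_range_succ]
    push_cast; ring

/-- squared norm polynomial -/
def gQ (m : ℕ) : MvPolynomial (Fin m) ℝ := ∑ a, MvPolynomial.X a ^ 2

lemma pderiv_gQ (m : ℕ) (a : Fin m) :
    MvPolynomial.pderiv a (gQ m) = 2 * MvPolynomial.X a := by
  simp [gQ, map_sum, MvPolynomial.pderiv_X, Pi.single_apply]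

lemma gE_gQ_pow (m k : ℕ) : gE m (gQ m ^ k) = gP m k := by
  induction k with
  | zero => simp [gE_one, gP]
  | succ k ih =>
    have h : gQ m ^ (k + 1) = ∑ a, MvPolynomial.X a * (MvPolynomial.X a * gQ m ^ k) := by
      rw [pow_succ']
      conv_lhs => enter [1]; rw [gQ]
      rw [Finset.sum_mul]
      exact Finset.sum_congr rfl fun a _ => by ring
    have h2 : ∀ a : Fin m, gE m (MvPolynomial.X a * (MvPolynomial.X a * gQ m ^ k)) =
        gE m (gQ m ^ k) + gE m (MvPolynomial.C (2 * k : ℝ) *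
          (MvPolynomial.X a ^ 2 * gQ m ^ (k - 1))) := by
      intro a
      rw [gE_X_mul, ← map_add]
      congr 1
      rw [MvPolynomial.pderiv_mul, MvPolynomial.pderiv_X_self, MvPolynomial.pderiv_pow, pderiv_gQ]
      have : (MvPolynomial.C (2 : ℝ) : MvPolynomial (Fin m) ℝ) = 2 := map_ofNat _ 2
      simp [this]; ring
    have h3 : ∑ a : Fin m, gE m (MvPolynomial.C (2 * k : ℝ) *
          (MvPolynomial.X a ^ 2 * gQ m ^ (k - 1))) = 2 * k * gE m (gQ m ^ k) := by
      simp only [gE_C_mul]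
      rw [← Finset.mul_sum, ← map_sum, ← Finset.sum_mul]
      cases k with
      | zero => simp
      | succ k =>
        rw [pow_succ' (gQ m) k]; rfl
    rw [h, map_sum, Finset.sum_congr rfl fun a _ => h2 a, Finset.sum_add_distrib, h3, ih]
    simp [gP, Finset.prod_range_succ]; ring

lemma pow_sum_expand {R : Type*} [CommSemiring R] {m : ℕ} (x y : Fin m → R) (n : ℕ) :
    (∑ a, x a * y a) ^ n = ∑ f : Fin n → Fin m, (∏ j, x (f j)) * (∏ j, y (f j)) := by
  simp only [← Finset.prod_mul_distrib]
  rw [← Fintype.piFinset_univ, ← Finset.prod_univ_sum (fun _ => Finset.univ) (fun _ a => x a * y a)]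
  simp

/-- moment tensor -/
def gT (m n : ℕ) (f : Fin n → Fin m) : ℝ := gE m (∏ j, MvPolynomial.X (f j))

lemma gT_contract (m n : ℕ) (y : Fin m → ℝ) :
    ∑ f, gT m n f * ∏ j, y (f j) = gE m (gl y ^ n) := by
  rw [gl, pow_sum_expand, map_sum]
  refine Finset.sum_congr rfl fun f _ => ?_
  rw [← map_prod, gE_C_mul, gT, mul_comm]

lemma gT_sq (m k : ℕ) : ∑ f, gT m (2 * k) f ^ 2 = gD k * gP m k := by
  have h : ∑ f : Fin (2 * k) → Fin m, MvPolynomial.C (gT m (2 * k) f) *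
      ∏ j, (MvPolynomial.X (f j) : MvPolynomial (Fin m) ℝ)
      = MvPolynomial.C (gD k) * gQ m ^ k := by
    apply MvPolynomial.funext
    intro y
    have := gT_contract m (2 * k) y
    rw [gE_gl_even] at this
    simpa [gQ, map_sum, map_prod] using this
  have h2 := congrArg (gE m) h
  rw [map_sum, gE_C_mul, gE_gQ_pow] at h2
  rw [← h2]
  refine Finset.sum_congr rfl fun f _ => ?_
  rw [gE_C_mul, gT, sq]

lemma sum_inner_pow {m B : ℕ} (v : Fin B → Fin m → ℝ) (n : ℕ) :
    ∑ i, ∑ j, (∑ a, v i a * v j a) ^ n = ∑ f : Fin n → Fin m, (∑ i, ∏ a, v i (f a)) ^ 2 := by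
  simp only [pow_sum_expand, sq, Finset.sum_mul_sum]
  rw [Finset.sum_comm (s := (Finset.univ : Finset (Fin n → Fin m)))]
  exact Finset.sum_congr rfl fun i _ => Finset.sum_comm

lemma gD_pos (k : ℕ) : 0 < gD k := Finset.prod_pos fun j _ => by positivity

lemma gP_pos {m : ℕ} (hm : 2 ≤ m) (k : ℕ) : 0 < gP m k := Finset.prod_pos fun j _ => by
  have : (0 : ℝ) < m := by exact_mod_cast (by omega : 0 < m)
  positivity

lemma welch {m B : ℕ} (hm : 2 ≤ m) (v : Fin B → Fin m → ℝ) (hv : ∀ i, ∑ a, v i a ^ 2 = 1) (k : ℕ) :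
    (B : ℝ) ^ 2 * (gD k / gP m k) ≤ ∑ i, ∑ j, (∑ a, v i a * v j a) ^ (2 * k) := by
  rw [sum_inner_pow]
  have hcs := Finset.sum_mul_sq_le_sq_mul_sq Finset.univ (gT m (2 * k))
    (fun f => ∑ i, ∏ a, v i (f a))
  have h1 : ∑ f, gT m (2 * k) f * (∑ i, ∏ a, v i (f a)) = B * gD k := by
    simp only [Finset.mul_sum]
    rw [Finset.sum_comm]
    simp [gT_contract, gE_gl_even, hv]
  rw [h1, gT_sq] at hcs
  have hD := gD_pos k
  have hP := gP_pos hm k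
  rw [← mul_div_assoc, div_le_iff₀ hP]
  refine le_of_mul_le_mul_left ?_ hD
  linarith

lemma ratio_sq {m : ℕ} (hm : 2 ≤ m) (k : ℕ) : (gD k / gP m k) ^ 2 ≤ 1 / (2 * k + 1) := by
  induction k with
  | zero => simp [gD, gP]
  | succ k ih =>
    have hm' : (2 : ℝ) ≤ m := by exact_mod_cast hm
    have e : gD (k + 1) / gP m (k + 1) = gD k / gP m k * ((2 * k + 1) / (m + 2 * k)) := by
      rw [gD, gP, Finset.prod_range_succ, Finset.prod_range_succ, mul_div_mul_comm]; rfl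
    rw [e, mul_pow]
    have h2 : ((2 * k + 1 : ℝ) / (m + 2 * k)) ≤ (2 * k + 1) / (2 * k + 2) := by
      apply div_le_div_of_nonneg_left <;> first | positivity | linarith
    have h3 : ((2 * k + 1 : ℝ) / (m + 2 * k)) ^ 2 ≤ ((2 * k + 1) / (2 * k + 2)) ^ 2 :=
      pow_le_pow_left₀ (by positivity) h2 2
    calc _ ≤ 1 / (2 * (k : ℝ) + 1) * ((2 * k + 1) / (2 * k + 2)) ^ 2 :=
          mul_le_mul ih h3 (by positivity) (by positivity)
      _ = (2 * k + 1) / (2 * k + 2) ^ 2 := by field_simp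
      _ ≤ _ := by
        rw [div_le_div_iff₀ (by positivity) (by positivity)]
        push_cast; nlinarith

lemma coef_eq {m : ℕ} (hm : 2 ≤ m) (t : ℝ) (k : ℕ) :
    (t ^ 2) ^ k / ((ascPochhammer ℝ k).eval ((m : ℝ) / 2) * (Nat.factorial k : ℝ)) =
      (2 * t) ^ (2 * k) / (Nat.factorial (2 * k) : ℝ) * (gD k / gP m k) := by
  have hm0 : (0 : ℝ) < m := by exact_mod_cast (by omega : 0 < m)
  induction k with
  | zero => simp [gD, gP]
  | succ k ih =>
    have e : gD (k + 1) / gP m (k + 1) = gD k / gP m k * ((2 * k + 1) / (m + 2 * k)) := by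
      rw [gD, gP, Finset.prod_range_succ, Finset.prod_range_succ, mul_div_mul_comm]; rfl
    have l : (t ^ 2) ^ (k + 1) /
        ((ascPochhammer ℝ (k + 1)).eval ((m : ℝ) / 2) * (Nat.factorial (k + 1) : ℝ)) =
        (t ^ 2) ^ k / ((ascPochhammer ℝ k).eval ((m : ℝ) / 2) * (Nat.factorial k : ℝ)) *
          (t ^ 2 / (((m : ℝ) / 2 + k) * (k + 1))) := by
      rw [ascPochhammer_succ_eval, Nat.factorial_succ, div_mul_div_comm]
      push_cast; ring
    rw [l, ih, e, show 2 * (k + 1) = 2 * k + 1 + 1 by ring, Nat.factorial_succ, Nat.factorial_succ]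
    have : (m : ℝ) + 2 * k ≠ 0 := by positivity
    have : (m : ℝ) / 2 + k ≠ 0 := by positivity
    have := (gP_pos hm k).ne'
    push_cast
    field_simp
    ring

lemma main_ineq (t : ℝ) (ht : 0 < t) {m B : ℕ} (hm : 2 ≤ m) (hB : 1 < B)
    (v : Fin B → Fin m → ℝ) (hv : ∀ i, ∑ a, v i a ^ 2 = 1) :
    (B : ℝ) ^ 2 * hyp0F1 ((m : ℝ) / 2) (t ^ 2) <
      ∑ i, ∑ j, Real.exp (2 * t * ∑ a, v i a * v j a) := by
  set A : ℕ → ℝ := fun n => ∑ i, ∑ j, (∑ a, v i a * v j a) ^ n with hA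
  set h : ℕ → ℝ := fun n => (2 * t) ^ n / (Nat.factorial n : ℝ) * A n with hh
  have hsum : HasSum h (∑ i, ∑ j, Real.exp (2 * t * ∑ a, v i a * v j a)) := by
    have e : h = fun n => ∑ i, ∑ j, (2 * t * ∑ a, v i a * v j a) ^ n / (Nat.factorial n : ℝ) := by
      funext n
      simp only [hh, hA, Finset.mul_sum (s := (Finset.univ : Finset (Fin B)))]
      refine Finset.sum_congr rfl fun i _ => Finset.sum_congr rfl fun j _ => ?_
      rw [mul_pow (2 * t)]; ring
    rw [e]
    refine hasSum_sum fun i _ => hasSum_sum fun j _ => ?_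
    rw [Real.exp_eq_exp_ℝ]
    exact NormedSpace.expSeries_div_hasSum_exp _
  have hA0 : ∀ n, 0 ≤ A n := fun n => by
    simp only [hA]; rw [sum_inner_pow]; positivity
  have hh0 : ∀ n, 0 ≤ h n := fun n => mul_nonneg (by positivity) (hA0 n)
  have inj : Function.Injective (fun k : ℕ => 2 * k) := fun a b hab => by simpa using hab
  have hs2 : Summable (fun k => h (2 * k)) := hsum.summable.comp_injective inj
  set g : ℕ → ℝ := fun k => (B : ℝ) ^ 2 *
    ((t ^ 2) ^ k / ((ascPochhammer ℝ k).eval ((m : ℝ) / 2) * (Nat.factorial k : ℝ))) with hg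
  have hge : ∀ k, g k = (2 * t) ^ (2 * k) / (Nat.factorial (2 * k) : ℝ) *
      ((B : ℝ) ^ 2 * (gD k / gP m k)) := fun k => by
    simp only [hg]; rw [coef_eq hm]; ring
  have hg0 : ∀ k, 0 ≤ g k := fun k => by
    rw [hge]
    have := gD_pos k
    have := gP_pos hm k
    positivity
  have hgle : ∀ k, g k ≤ h (2 * k) := fun k => by
    rw [hge]
    exact mul_le_mul_of_nonneg_left (welch hm v hv k) (by positivity)
  have hlt : g (B ^ 2) < h (2 * B ^ 2) := by
    rw [hge]
    refine mul_lt_mul_of_pos_left ?_ (by positivity)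
    have hB0 : (0 : ℝ) < B := by exact_mod_cast (by omega : 0 < B)
    have h1 : (B : ℝ) ≤ A (2 * B ^ 2) := by
      have : ∀ i : Fin B, (1 : ℝ) ≤ ∑ j, (∑ a, v i a * v j a) ^ (2 * B ^ 2) := fun i => by
        have h1 : (∑ a, v i a * v i a) ^ (2 * B ^ 2) = 1 := by
          simp only [← sq, hv, one_pow]
        rw [← h1]
        exact Finset.single_le_sum (f := fun j => (∑ a, v i a * v j a) ^ (2 * B ^ 2))
          (fun j _ => by rw [pow_mul]; positivity) (Finset.mem_univ i)
      calc (B : ℝ) = ∑ i : Fin B, (1 : ℝ) := by simp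
        _ ≤ _ := Finset.sum_le_sum fun i _ => this i
    have h2 := ratio_sq hm (B ^ 2)
    have h3 : gD (B ^ 2) / gP m (B ^ 2) < 1 / B := by
      refine lt_of_pow_lt_pow_left₀ 2 (by positivity) (h2.trans_lt ?_)
      rw [div_pow, one_pow]
      apply one_div_lt_one_div_of_lt (by positivity)
      push_cast; nlinarith [sq_nonneg (B : ℝ)]
    calc (B : ℝ) ^ 2 * (gD (B ^ 2) / gP m (B ^ 2)) < (B : ℝ) ^ 2 * (1 / B) := by gcongr
      _ = (B : ℝ) := by field_simp
      _ ≤ _ := h1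
  have hgs : Summable g := Summable.of_nonneg_of_le hg0 hgle hs2
  calc (B : ℝ) ^ 2 * hyp0F1 ((m : ℝ) / 2) (t ^ 2) = ∑' k, g k := by
        rw [hyp0F1, ← tsum_mul_left]
    _ < ∑' k, h (2 * k) := Summable.tsum_lt_tsum hgle hlt hgs hs2
    _ ≤ ∑' n, h n := tsum_comp_le_tsum_of_inj hsum.summable hh0 inj
    _ = _ := hsum.tsum_eq

/-- Strict lower bound for the off-diagonal empirical uniformity quantity:
if `₀F₁(;m/2;t²) > e^{2t}/B` then for any `B > 1` points on the unit sphere of `ℝ^m`,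
`log((1/(B(B−1))) Σ_{i≠j} e^{−t‖u_i−u_j‖²}) > log((B e^{−2t} ₀F₁(;m/2;t²) − 1)/(B−1))`. -/
theorem empirical_offdiag_unif_gt (t : ℝ) (ht : 0 < t) {m B : ℕ} (hm : 2 ≤ m) (hB : 1 < B)
    (hF : hyp0F1 ((m : ℝ) / 2) (t ^ 2) > Real.exp (2 * t) / (B : ℝ))
    (u : Fin B → Sph m) :
    Real.log ((1 / ((B : ℝ) * ((B : ℝ) - 1))) *
        ∑ i : Fin B, ∑ j : Fin B,
          if i ≠ j then Real.exp (-t * ‖(u i : Euc m) - (u j : Euc m)‖ ^ 2) else 0) >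
      Real.log (((B : ℝ) * Real.exp (-2 * t) * hyp0F1 ((m : ℝ) / 2) (t ^ 2) - 1) / ((B : ℝ) - 1)) := by
  have hv : ∀ i, ∑ a, ((u i : Euc m) a) ^ 2 = 1 := fun i => by
    have h := norm_eq_of_mem_sphere (u i)
    rw [← EuclideanSpace.real_norm_sq_eq, h, one_pow]
  have key := main_ineq t ht hm hB (fun i a => (u i : Euc m) a) hv
  have hB1 : (1 : ℝ) < B := by exact_mod_cast hB
  have hB0 : (0 : ℝ) < B := by linarith
  have hBm : (0 : ℝ) < (B : ℝ) - 1 := by linarith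
  set F := hyp0F1 ((m : ℝ) / 2) (t ^ 2) with hFdef
  have hexp : Real.exp (-2 * t) * Real.exp (2 * t) = 1 := by
    rw [← Real.exp_add]; simp
  have hterm : ∀ i j : Fin B, Real.exp (-t * ‖(u i : Euc m) - (u j : Euc m)‖ ^ 2) =
      Real.exp (-2 * t) * Real.exp (2 * t * ∑ a, (u i : Euc m) a * (u j : Euc m) a) := by
    intro i j
    rw [← Real.exp_add]
    congr 1
    rw [EuclideanSpace.real_norm_sq_eq]
    have : ∑ a, (((u i : Euc m) - (u j : Euc m)) a) ^ 2 =
        ∑ a, ((u i : Euc m) a) ^ 2 + ∑ a, ((u j : Euc m) a) ^ 2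
          - 2 * ∑ a, (u i : Euc m) a * (u j : Euc m) a := by
      rw [Finset.mul_sum, ← Finset.sum_add_distrib, ← Finset.sum_sub_distrib]
      refine Finset.sum_congr rfl fun a _ => ?_
      simp only [PiLp.sub_apply]; ring
    rw [this, hv, hv]; ring
  have hS : (∑ i : Fin B, ∑ j : Fin B,
      if i ≠ j then Real.exp (-t * ‖(u i : Euc m) - (u j : Euc m)‖ ^ 2) else 0) =
      Real.exp (-2 * t) *
        (∑ i, ∑ j, Real.exp (2 * t * ∑ a, (u i : Euc m) a * (u j : Euc m) a)) - B := by
    have h1 : ∀ i j : Fin B,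
        (if i ≠ j then Real.exp (-t * ‖(u i : Euc m) - (u j : Euc m)‖ ^ 2) else 0) =
        Real.exp (-2 * t) * Real.exp (2 * t * ∑ a, (u i : Euc m) a * (u j : Euc m) a)
          - if i = j then 1 else 0 := by
      intro i j
      rw [← hterm]
      by_cases hij : i = j
      · subst hij; simp
      · simp [hij]
    simp only [h1, Finset.sum_sub_distrib, Finset.mul_sum (s := (Finset.univ : Finset (Fin B)))]
    simp
  rw [hS, gt_iff_lt]
  apply Real.log_lt_log
  · apply div_pos _ hBm
    rw [gt_iff_lt, div_lt_iff₀ hB0] at hF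
    have := mul_lt_mul_of_pos_left hF (Real.exp_pos (-2 * t))
    nlinarith
  · rw [one_div, inv_mul_eq_div, div_lt_div_iff₀ hBm (by positivity)]
    have h2 := mul_lt_mul_of_pos_left key (Real.exp_pos (-2 * t))
    have h3 := mul_lt_mul_of_pos_right h2 hBm
    linarith
end
end
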